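/- If the initial route valuation of the CULO model is s^0 = 0 — so that the initial strategy p^0 assigns equal probability 1/|K_w| to every route serving each OD pair w — and the CULO iterates converge to a point p* ∈ P*, then p* is the MEUE strategy, i.e., the unique minimizer of the negative entropy φ over P*. -/

import Mathlib

/-!
Two user equilibria have the same link flow, by strict monotonicity of `u` applied to the
demand-weighted variational inequalities (`weighted_vi`, `flow_eq`). Hence for `p' ∈ P*` the
difference `δ = p' - p*` is annihilated by `bΛ`, and it sums to zero over every OD pair.
Started from `s⁰ = 0`, each valuation `sᵗ` is a combination of route costs, so it lies in the range
of `Λᵀ` (`valuation_mem_range`); since `log pᵗ` is `-r sᵗ` up to a constant on each OD pair,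
`∑ₖ qₖ δₖ log pᵗₖ = 0` for every `t`. Consequently
`φ(p') - φ(p*) = D(p', pᵗ) - D(p*, pᵗ)` for every `t`, where `D` is the KL divergence.

As `t → ∞`, `D(p*, pᵗ) → 0`. The other term could diverge, where `p*` vanishes and `p'` does not,
so it is bounded below by the squared Hellinger distance (`hellinger_le`), which is continuous
up to the boundary. In the limit `φ(p') - φ(p*) ≥ ∑ₖ qₖ (√p'ₖ - √p*ₖ)²`, which is positive as soon
as `p' ≠ p*`.
-/

open Matrix Filter Finset Topology

noncomputable section

variable {A W K : Type*}

/-- OD-route incidence matrix `Σ`: each column is the standard unit vector at `od k`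
(every route `k` serves exactly one OD pair, `od k`). -/
def Sig [DecidableEq W] (od : K → W) : Matrix W K ℝ :=
  Matrix.of fun w k => if od k = w then 1 else 0

/-- The strategy set `P = {p : p ≥ 0, Σ p = 1}`. -/
def Pset [Fintype K] [DecidableEq W] (od : K → W) : Set (K → ℝ) :=
  {p | (∀ k, 0 ≤ p k) ∧ ∀ w : W, (Sig od).mulVec p w = 1}

/-- `q = Σᵀ d`. -/
def qvec [Fintype W] [DecidableEq W] (od : K → W) (d : W → ℝ) : K → ℝ :=
  (Sig od)ᵀ.mulVec d

/-- `bΛ = Λ · diag q`. -/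
def bLam [Fintype K] [Fintype W] [DecidableEq W] [DecidableEq K]
    (Λ : Matrix A K ℝ) (od : K → W) (d : W → ℝ) : Matrix A K ℝ :=
  Λ * Matrix.diagonal (qvec od d)

/-- The link-flow set `X = {bΛ p : p ∈ P}`. -/
def Xset [Fintype K] [Fintype W] [DecidableEq W] [DecidableEq K]
    (Λ : Matrix A K ℝ) (od : K → W) (d : W → ℝ) : Set (A → ℝ) :=
  (fun p => (bLam Λ od d).mulVec p) '' Pset od

/-- The route-cost map `c(p) = Λᵀ u(bΛ p)`. -/
def routeCost [Fintype A] [Fintype K] [Fintype W] [DecidableEq W] [DecidableEq K]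
    (Λ : Matrix A K ℝ) (od : K → W) (d : W → ℝ)
    (u : (A → ℝ) → (A → ℝ)) : (K → ℝ) → (K → ℝ) :=
  fun p => Λᵀ.mulVec (u ((bLam Λ od d).mulVec p))

/-- The UE set `P*`: solutions of the variational inequality. -/
def UEset [Fintype A] [Fintype K] [Fintype W] [DecidableEq W] [DecidableEq K]
    (Λ : Matrix A K ℝ) (od : K → W) (d : W → ℝ)
    (u : (A → ℝ) → (A → ℝ)) : Set (K → ℝ) :=
  {p | p ∈ Pset od ∧ ∀ p' ∈ Pset od, 0 ≤ routeCost Λ od d u p ⬝ᵥ (p' - p)}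

/-- The logit map `q_r`. -/
def logit [Fintype K] [DecidableEq W] (od : K → W) (r : ℝ) (s : K → ℝ) : K → ℝ :=
  fun k => Real.exp (-r * s k) /
    ∑ k' ∈ Finset.univ.filter (fun k' => od k' = od k), Real.exp (-r * s k')

/-- The negative entropy `φ(p) = ∑ₖ qₖ pₖ log pₖ` (with `0·log 0 = 0`). -/
def negEnt [Fintype K] [Fintype W] [DecidableEq W] (od : K → W) (d : W → ℝ)
    (p : K → ℝ) : ℝ :=
  ∑ k, qvec od d k * (p k * Real.log (p k))

/-- The KL divergence `D(p, p') = ∑ₖ qₖ pₖ (log pₖ − log p'ₖ)` (with `0·log 0 = 0`). -/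
def KLdiv [Fintype K] [Fintype W] [DecidableEq W] (od : K → W) (d : W → ℝ)
    (p p' : K → ℝ) : ℝ :=
  ∑ k, qvec od d k * (p k * (Real.log (p k) - Real.log (p' k)))

lemma qvec_apply [Fintype W] [DecidableEq W] (od : K → W) (d : W → ℝ) (k : K) :
    qvec od d k = d (od k) := by
  simp [qvec, Sig, Matrix.mulVec, dotProduct]

lemma sum_fiber_of_mem [Fintype K] [DecidableEq W] {od : K → W} {p : K → ℝ}
    (hp : p ∈ Pset od) (w : W) :
    ∑ k ∈ Finset.univ.filter (fun k => od k = w), p k = 1 := by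
  have h := hp.2 w
  simpa [Sig, Matrix.mulVec, dotProduct, Finset.sum_filter] using h

/-- A weight depending only on the OD pair is orthogonal to differences of strategies. -/
lemma sum_od_mul_sub [Fintype K] [Fintype W] [DecidableEq W] {od : K → W} {p p' : K → ℝ}
    (hp : p ∈ Pset od) (hp' : p' ∈ Pset od) (g : W → ℝ) :
    ∑ k, g (od k) * (p' k - p k) = 0 := by
  rw [← Finset.sum_fiberwise Finset.univ od]
  refine Finset.sum_eq_zero fun w _ => ?_
  have h : ∀ k ∈ Finset.univ.filter (fun k => od k = w),
      g (od k) * (p' k - p k) = g w * (p' k - p k) := by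
    intro k hk
    rw [(Finset.mem_filter.1 hk).2]
  rw [Finset.sum_congr rfl h, ← Finset.mul_sum, Finset.sum_sub_distrib,
    sum_fiber_of_mem hp', sum_fiber_of_mem hp]
  simp

/-- Since `P` is a product of simplices, the variational inequality holds on each OD pair
separately, hence also after weighting the OD pairs by the demand. -/
lemma weighted_vi [Fintype A] [Fintype K] [Fintype W] [DecidableEq W] [DecidableEq K]
    {Λ : Matrix A K ℝ} {od : K → W} {d : W → ℝ} (hd : ∀ w, 0 < d w)
    {u : (A → ℝ) → (A → ℝ)} {p p' : K → ℝ}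
    (hp : p ∈ UEset Λ od d u) (hp' : p' ∈ Pset od) :
    0 ≤ ∑ k, d (od k) * (routeCost Λ od d u p k * (p' k - p k)) := by
  rw [← Finset.sum_fiberwise Finset.univ od]
  refine Finset.sum_nonneg fun w _ => ?_
  have h : ∀ k ∈ Finset.univ.filter (fun k => od k = w),
      d (od k) * (routeCost Λ od d u p k * (p' k - p k))
        = d w * (routeCost Λ od d u p k * (p' k - p k)) := by
    intro k hk
    rw [(Finset.mem_filter.1 hk).2]
  rw [Finset.sum_congr rfl h, ← Finset.mul_sum]
  refine mul_nonneg (hd w).le ?_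
  -- deviate from `p` to `p'` on the OD pair `w` only
  have hmem : (fun k => if od k = w then p' k else p k) ∈ Pset od := by
    refine ⟨fun k => ?_, fun w' => ?_⟩
    · dsimp only
      split_ifs
      · exact hp'.1 k
      · exact hp.1.1 k
    · by_cases hw : w' = w
      · subst hw
        rw [← hp'.2 w']
        refine Finset.sum_congr rfl fun k _ => ?_
        by_cases hk : od k = w' <;> simp [Sig, hk]
      · rw [← hp.1.2 w']
        refine Finset.sum_congr rfl fun k _ => ?_
        by_cases hk : od k = w' <;> simp [Sig, hk, hw]
  have h2 := hp.2 _ hmem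
  rw [dotProduct] at h2
  rw [Finset.sum_filter]
  refine h2.trans_eq (Finset.sum_congr rfl fun k _ => ?_)
  by_cases hk : od k = w <;> simp [hk]

/-- The adjunction between `Λᵀ` and `bΛ`, for the demand-weighted pairing on routes. -/
lemma dotProduct_bLam [Fintype A] [Fintype K] [Fintype W] [DecidableEq W] [DecidableEq K]
    (Λ : Matrix A K ℝ) (od : K → W) (d : W → ℝ) (v : A → ℝ) (x : K → ℝ) :
    v ⬝ᵥ (bLam Λ od d).mulVec x = ∑ k, d (od k) * (Λᵀ.mulVec v k * x k) := by
  rw [bLam, ← Matrix.mulVec_mulVec, Matrix.dotProduct_mulVec, Matrix.mulVec_transpose,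
    dotProduct]
  refine Finset.sum_congr rfl fun k _ => ?_
  rw [Matrix.mulVec_diagonal, qvec_apply]
  ring

/-- The equilibrium link flow is unique. -/
lemma flow_eq [Fintype A] [Fintype K] [Fintype W] [DecidableEq W] [DecidableEq K]
    {Λ : Matrix A K ℝ} {od : K → W} {d : W → ℝ} (hd : ∀ w, 0 < d w)
    {u : (A → ℝ) → (A → ℝ)}
    (hmono : ∀ x ∈ Xset Λ od d, ∀ x' ∈ Xset Λ od d, x ≠ x' →
      0 < (u x - u x') ⬝ᵥ (x - x'))
    {p p' : K → ℝ} (hp : p ∈ UEset Λ od d u) (hp' : p' ∈ UEset Λ od d u) :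
    (bLam Λ od d).mulVec p = (bLam Λ od d).mulVec p' := by
  by_contra hne
  have h := hmono _ ⟨p, hp.1, rfl⟩ _ ⟨p', hp'.1, rfl⟩ hne
  have h1 := weighted_vi hd hp hp'.1
  have h2 := weighted_vi hd hp' hp.1
  dsimp only at h
  rw [← Matrix.mulVec_sub, dotProduct_bLam] at h
  have h3 : ∑ k, d (od k) * (Λᵀ.mulVec (u ((bLam Λ od d).mulVec p)
        - u ((bLam Λ od d).mulVec p')) k * (p - p') k)
      = -(∑ k, d (od k) * (routeCost Λ od d u p k * (p' k - p k)))
        - ∑ k, d (od k) * (routeCost Λ od d u p' k * (p k - p' k)) := by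
    rw [← Finset.sum_neg_distrib, ← Finset.sum_sub_distrib]
    refine Finset.sum_congr rfl fun k _ => ?_
    rw [Matrix.mulVec_sub]
    simp only [routeCost, Pi.sub_apply]
    ring
  linarith

lemma valuation_mem_range [Fintype A] [Fintype K] [Fintype W] [DecidableEq W] [DecidableEq K]
    {Λ : Matrix A K ℝ} {od : K → W} {d : W → ℝ} {u : (A → ℝ) → (A → ℝ)}
    {η : ℕ → ℝ} {s p : ℕ → K → ℝ} (hs0 : s 0 = 0)
    (hsdyn : ∀ t, s (t + 1) = s t + η (t + 1) • routeCost Λ od d u (p t)) (t : ℕ) :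
    ∃ v : A → ℝ, s t = Λᵀ.mulVec v := by
  induction t with
  | zero => exact ⟨0, by simp [hs0]⟩
  | succ t ih =>
    obtain ⟨v, hv⟩ := ih
    refine ⟨v + η (t + 1) • u ((bLam Λ od d).mulVec (p t)), ?_⟩
    rw [hsdyn, hv, Matrix.mulVec_add, Matrix.mulVec_smul, routeCost]

lemma logit_sum_pos [Fintype K] [DecidableEq W] (od : K → W) (r : ℝ) (s : K → ℝ) (k : K) :
    0 < ∑ k' ∈ Finset.univ.filter (fun k' => od k' = od k), Real.exp (-r * s k') :=
  Finset.sum_pos (fun _ _ => Real.exp_pos _) ⟨k, by simp⟩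

lemma logit_pos [Fintype K] [DecidableEq W] (od : K → W) (r : ℝ) (s : K → ℝ) (k : K) :
    0 < logit od r s k :=
  div_pos (Real.exp_pos _) (logit_sum_pos od r s k)

lemma log_logit [Fintype K] [DecidableEq W] (od : K → W) (r : ℝ) (s : K → ℝ) (k : K) :
    Real.log (logit od r s k) = -r * s k -
      Real.log (∑ k' ∈ Finset.univ.filter (fun k' => od k' = od k), Real.exp (-r * s k')) := by
  rw [logit, Real.log_div (Real.exp_pos _).ne' (logit_sum_pos od r s k).ne', Real.log_exp]

/-- For `y > 0`, the pointwise KL divergence dominates the pointwise squared Hellinger distance. -/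
lemma hellinger_le {x y : ℝ} (hx : 0 ≤ x) (hy : 0 < y) :
    (√x - √y) ^ 2 + (x - y) ≤ x * (Real.log x - Real.log y) := by
  rcases hx.eq_or_lt with rfl | hx
  · simp [Real.sq_sqrt hy.le]
  · have ha := Real.sqrt_pos.2 hx
    have hb := Real.sqrt_pos.2 hy
    have hxa := Real.sq_sqrt hx.le
    have hyb := Real.sq_sqrt hy.le
    generalize √x = a at *
    generalize √y = b at *
    subst hxa hyb
    -- `log (b / a) ≤ b / a - 1`, multiplied by `2 a²`
    have h := Real.log_le_sub_one_of_pos (div_pos hb ha)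
    rw [Real.log_div hb.ne' ha.ne'] at h
    rw [Real.log_pow, Real.log_pow]
    have h2 := mul_le_mul_of_nonneg_left h (by positivity : 0 ≤ 2 * a ^ 2)
    have h3 : 2 * a ^ 2 * (b / a - 1) = 2 * a * b - 2 * a ^ 2 := by
      field_simp
    push_cast
    nlinarith

/-- Proposition 5, MEUE affirmation condition (A): if the initial
route valuation of the CULO model is `s⁰ = 0` (so the initial strategy is the equal
distribution) and the iterates converge to `p* ∈ P*`, then `p*` is the MEUE strategy,
i.e. the unique minimizer of the negative entropy `φ` over `P*`. -/
theorem statement11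
    [Fintype A] [Fintype W] [Fintype K] [DecidableEq W] [DecidableEq K]
    (Λ : Matrix A K ℝ) (od : K → W) (d : W → ℝ)
    (hΛ : ∀ a k, Λ a k = 0 ∨ Λ a k = 1)
    (hd : ∀ w, 0 < d w)
    (u : (A → ℝ) → (A → ℝ))
    (hu : ContDiffOn ℝ 1 u (Xset Λ od d))
    (hnonneg : ∀ x ∈ Xset Λ od d, ∀ a, 0 ≤ u x a)
    (hmono : ∀ x ∈ Xset Λ od d, ∀ x' ∈ Xset Λ od d, x ≠ x' →
      0 < (u x - u x') ⬝ᵥ (x - x'))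
    (r : ℝ) (hr : 0 < r)
    (η : ℕ → ℝ) (hη : ∀ t, 0 < η t)
    (s : ℕ → K → ℝ) (p : ℕ → K → ℝ)
    (hs0 : s 0 = 0)
    (hsdyn : ∀ t, s (t + 1) = s t + η (t + 1) • routeCost Λ od d u (p t))
    (hpdyn : ∀ t, p t = logit od r (s t))
    (pstar : K → ℝ) (hUE : pstar ∈ UEset Λ od d u)
    (hconv : Tendsto p atTop (nhds pstar)) :
    ∀ p' ∈ UEset Λ od d u, p' ≠ pstar → negEnt od d pstar < negEnt od d p' := by
  intro p' hp' hne
  have hflow := flow_eq hd hmono hUE hp'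
  -- the logarithm of every iterate is orthogonal to `p' - p*`
  have horth : ∀ t, ∑ k, d (od k) * (Real.log (p t k) * (p' k - pstar k)) = 0 := by
    intro t
    obtain ⟨v, hv⟩ := valuation_mem_range hs0 hsdyn t
    have h1 : ∑ k, d (od k) * (s t k * (p' k - pstar k)) = 0 := by
      have h := dotProduct_bLam Λ od d v (p' - pstar)
      rw [Matrix.mulVec_sub, hflow, sub_self, dotProduct_zero, ← hv] at h
      exact h.symm
    have h2 := sum_od_mul_sub hUE.1 hp'.1 (fun w => d w * Real.log
      (∑ k' ∈ Finset.univ.filter (fun k' => od k' = w), Real.exp (-r * s t k')))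
    have h3 : ∑ k, d (od k) * (Real.log (p t k) * (p' k - pstar k))
        = -r * ∑ k, d (od k) * (s t k * (p' k - pstar k))
          - ∑ k, d (od k) * Real.log (∑ k' ∈ Finset.univ.filter (fun k' => od k' = od k),
              Real.exp (-r * s t k')) * (p' k - pstar k) := by
      rw [Finset.mul_sum, ← Finset.sum_sub_distrib]
      refine Finset.sum_congr rfl fun k _ => ?_
      rw [hpdyn, log_logit]
      ring
    rw [h3, h1, h2]
    simp
  have hident : ∀ t, negEnt od d p' - negEnt od d pstar
      = ∑ k, d (od k) * (p' k * (Real.log (p' k) - Real.log (p t k)))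
        - ∑ k, d (od k) * (pstar k * (Real.log (pstar k) - Real.log (p t k))) := by
    intro t
    have h := horth t
    rw [← sub_zero (negEnt od d p' - negEnt od d pstar), ← h, negEnt, negEnt,
      ← Finset.sum_sub_distrib, ← Finset.sum_sub_distrib, ← Finset.sum_sub_distrib]
    refine Finset.sum_congr rfl fun k _ => ?_
    rw [qvec_apply]
    ring
  have hbound : ∀ t, ∑ k, d (od k) * ((√(p' k) - √(p t k)) ^ 2 + (p' k - p t k))
      - ∑ k, d (od k) * (pstar k * (Real.log (pstar k) - Real.log (p t k)))
      ≤ negEnt od d p' - negEnt od d pstar := by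
    intro t
    rw [hident t]
    refine sub_le_sub_right (Finset.sum_le_sum fun k _ => ?_) _
    refine mul_le_mul_of_nonneg_left (hellinger_le (hp'.1.1 k) ?_) (hd _).le
    rw [hpdyn]
    exact logit_pos od r (s t) k
  have hpk : ∀ k, Tendsto (fun t => p t k) atTop (𝓝 (pstar k)) :=
    fun k => (tendsto_pi_nhds.1 hconv) k
  have hlimKL : Tendsto (fun t => ∑ k, d (od k) *
      (pstar k * (Real.log (pstar k) - Real.log (p t k)))) atTop (𝓝 0) := by
    rw [← Finset.sum_const_zero (s := (Finset.univ : Finset K))]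
    refine tendsto_finsetSum _ fun k _ => ?_
    by_cases hk : pstar k = 0
    · simp [hk]
    · have h := ((((hpk k).log hk).const_sub (Real.log (pstar k))).const_mul
        (pstar k)).const_mul (d (od k))
      simpa using h
  have hlimH : Tendsto (fun t => ∑ k, d (od k) *
      ((√(p' k) - √(p t k)) ^ 2 + (p' k - p t k))) atTop
      (𝓝 (∑ k, d (od k) * ((√(p' k) - √(pstar k)) ^ 2 + (p' k - pstar k)))) := by
    refine tendsto_finsetSum _ fun k _ => ?_
    exact ((((hpk k).sqrt.const_sub _).pow 2).add ((hpk k).const_sub _)).const_mul _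
  have hle := le_of_tendsto' (hlimH.sub hlimKL) hbound
  simp only [mul_add, Finset.sum_add_distrib] at hle
  rw [sum_od_mul_sub hUE.1 hp'.1 d] at hle
  obtain ⟨k, hk⟩ := Function.ne_iff.1 hne
  have hpos : 0 < ∑ k, d (od k) * (√(p' k) - √(pstar k)) ^ 2 := by
    refine Finset.sum_pos' (fun k _ => mul_nonneg (hd _).le (sq_nonneg _))
      ⟨k, Finset.mem_univ k, mul_pos (hd _) (sq_pos_of_ne_zero ?_)⟩
    exact sub_ne_zero.2 fun h => hk ((Real.sqrt_inj (hp'.1.1 k) (hUE.1.1 k)).1 h)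
  linarith
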